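/- Let φ : X → (−∞, ∞] be a σ(X, X*)-lower semicontinuous consistent risk measure. Then the following are equivalent: (i) φ(X) = E[X] for all X ∈ X; (ii) there exist a nonconstant Z ∈ X and a ∈ ℝ such that φ(tZ) = a t for all t ∈ ℝ; (iii) there exists a nonconstant U ∈ X with E[U] = 0 such that sup_{t ≥ 0} φ(tU) ≤ 0. Each of (i)–(iii) implies: (iv) the set of Y ∈ X* with φ*(Y) < ∞ equals {1} (the constant random variable 1). If, in addition, φ(λX) ≤ λφ(X) for all X ∈ X and λ ∈ [0,1], then statements (i)–(iv) are all equivalent. -/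

import Mathlib

/-!
The equivalences rest on one comparison (`ssd_of_bounded`): if `V` is centred and
`E[V⁺] ≥ 3 M / 2`, then `V` dominates every centred variable bounded by `M`.

* (ii) ⇒ (iii). Jensen's inequality gives `φ(X) ≥ E[X]` (`phi_ge_mean`), which forces
  `a = E[Z]`; then `U = Z - E[Z]` works by cash-additivity.
* (iii) ⇒ (i). A nonconstant centred `U` has `E[(tU)⁺] → ∞`, so large multiples of `U` dominate any
  given bounded centred variable, whence `φ ≤ 0` on these. Centred truncations of a centred
  `X ∈ 𝒳` converge to `X` weakly, and lower semicontinuity gives `φ(X) ≤ 0`; cash-additivity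
  and `φ ≥ E` conclude (`mean_of_flat_ray`).
* (i) ⇒ (iv). The conjugate is the supremum of a linear functional (`conj_mean`).
* (iv) ⇒ (i) for star-shaped `φ`. Take `U` a centred indicator. If (i) fails then, by the previous
  equivalence, `φ(tU) > c > 0` for some `t > 0`, and star-shapedness gives `φ(sU) ≥ c s / t` for
  `s ≥ t`. A centred `W` dominates `sU` with `s = 2 E[W⁺] / 3`, so `φ(W)` grows at least linearly in
  `E[W⁺] = E|W| / 2`. As `|E[WU]| ≤ E|W|`, the conjugate is finite at `1 + c / (3t) U ≠ 1`
  (`conj_lt_top`), contradicting (iv).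
-/

open MeasureTheory Set List
open scoped ENNReal NNReal

noncomputable section

namespace Collapse

variable {Ω : Type*} [MeasurableSpace Ω]

/-- A measure is atomless (nonatomic) if every set of positive measure contains a
measurable subset of strictly smaller positive measure. -/
def IsAtomless (P : Measure Ω) : Prop :=
  ∀ A : Set Ω, MeasurableSet A → 0 < P A →
    ∃ B : Set Ω, MeasurableSet B ∧ B ⊆ A ∧ 0 < P B ∧ P B < P A

/-- `X` and `Y` have the same law under `P`. -/
def SameLaw (P : Measure Ω) (X Y : Ω → ℝ) : Prop :=
  Measure.map X P = Measure.map Y P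

/-- `X` is not `P`-a.s. equal to a constant. -/
def Nonconstant (P : Measure Ω) (X : Ω → ℝ) : Prop :=
  ∀ c : ℝ, ¬ X =ᵐ[P] (fun _ => c)

/-- `X` and `Y` are comonotone:
`P(X ≤ x, Y ≤ y) = min (P(X ≤ x)) (P(Y ≤ y))` for all `x y`. -/
def Comonotone (P : Measure Ω) (X Y : Ω → ℝ) : Prop :=
  ∀ x y : ℝ,
    P ({ω | X ω ≤ x} ∩ {ω | Y ω ≤ y}) = min (P {ω | X ω ≤ x}) (P {ω | Y ω ≤ y})

/-- `X` and `Y` are antimonotone: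
`P(X ≤ x, Y ≤ y) = max (P(X ≤ x) + P(Y ≤ y) - 1) 0` for all `x y`
(in `ℝ≥0∞`, truncated subtraction realises the `max` with `0`). -/
def Antimonotone (P : Measure Ω) (X Y : Ω → ℝ) : Prop :=
  ∀ x y : ℝ,
    P ({ω | X ω ≤ x} ∩ {ω | Y ω ≤ y}) = (P {ω | X ω ≤ x} + P {ω | Y ω ≤ y}) - 1

/-- `q` is a quantile function of `X` under `P`. -/
def IsQuantile (P : Measure Ω) (X : Ω → ℝ) (q : ℝ → ℝ) : Prop :=
  ∀ s ∈ Set.Ioo (0:ℝ) 1,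
    sInf {x : ℝ | s ≤ (P {ω | X ω ≤ x}).toReal} ≤ q s ∧
    q s ≤ sInf {x : ℝ | s < (P {ω | X ω ≤ x}).toReal}

/-- `X` belongs to `L^∞(P)`: measurable and essentially bounded. -/
def MemLinf (P : Measure Ω) (X : Ω → ℝ) : Prop :=
  Measurable X ∧ ∃ M : ℝ, ∀ᵐ ω ∂P, |X ω| ≤ M

/-- A pair `(𝒳, 𝒳*)` of law-invariant vector subspaces of `L¹(P)` containing `L^∞(P)`
such that `X * Y ∈ L¹(P)` for all `X ∈ 𝒳`, `Y ∈ 𝒳*` (Assumption 2.1). -/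
structure PairedSpaces (P : Measure Ω) where
  carrier : Set (Ω → ℝ)
  dual : Set (Ω → ℝ)
  meas_carrier : ∀ X ∈ carrier, Measurable X
  meas_dual : ∀ Y ∈ dual, Measurable Y
  int_carrier : ∀ X ∈ carrier, Integrable X P
  int_dual : ∀ Y ∈ dual, Integrable Y P
  smul_carrier : ∀ X ∈ carrier, ∀ c : ℝ, (fun ω => c * X ω) ∈ carrier
  add_carrier : ∀ X ∈ carrier, ∀ X' ∈ carrier, (fun ω => X ω + X' ω) ∈ carrier
  smul_dual : ∀ Y ∈ dual, ∀ c : ℝ, (fun ω => c * Y ω) ∈ dual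
  add_dual : ∀ Y ∈ dual, ∀ Y' ∈ dual, (fun ω => Y ω + Y' ω) ∈ dual
  linf_carrier : ∀ X : Ω → ℝ, MemLinf P X → X ∈ carrier
  linf_dual : ∀ Y : Ω → ℝ, MemLinf P Y → Y ∈ dual
  lawinv_carrier : ∀ X ∈ carrier, ∀ X' : Ω → ℝ, Measurable X' → SameLaw P X' X → X' ∈ carrier
  lawinv_dual : ∀ Y ∈ dual, ∀ Y' : Ω → ℝ, Measurable Y' → SameLaw P Y' Y → Y' ∈ dual
  mul_int : ∀ X ∈ carrier, ∀ Y ∈ dual, Integrable (fun ω => X ω * Y ω) P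

/-- A subset `C` of `𝒳` is closed in the weak topology `σ(𝒳, 𝒳*)`, i.e. the topology
on `𝒳` induced by the linear functionals `X ↦ E[X Y]`, `Y ∈ 𝒳*`. -/
def WeakClosed (P : Measure Ω) (pr : PairedSpaces P) (C : Set (Ω → ℝ)) : Prop :=
  @IsClosed ↥pr.carrier
    (TopologicalSpace.induced
      (fun X : ↥pr.carrier => (fun Y : ↥pr.dual => ∫ ω, (X : Ω → ℝ) ω * (Y : Ω → ℝ) ω ∂P))
      Pi.topologicalSpace)
    {X : ↥pr.carrier | (X : Ω → ℝ) ∈ C}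

/-- `φ` is `σ(𝒳, 𝒳*)`-lower semicontinuous: every sublevel set is `σ(𝒳, 𝒳*)`-closed. -/
def WeakLSC (P : Measure Ω) (pr : PairedSpaces P) (φ : (Ω → ℝ) → EReal) : Prop :=
  ∀ m : ℝ, WeakClosed P pr {X | X ∈ pr.carrier ∧ φ X ≤ (m : EReal)}

/-- The (upper) support functional `σ_C(Y) = sup_{X ∈ C} E[XY]`. -/
def suppFn (P : Measure Ω) (C : Set (Ω → ℝ)) (Y : Ω → ℝ) : EReal :=
  ⨆ X ∈ C, ((∫ ω, X ω * Y ω ∂P : ℝ) : EReal)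

/-- The conjugate functional `φ*(Y) = sup_{X ∈ 𝒳} (E[XY] - φ(X))`. -/
def conj (P : Measure Ω) (𝒳 : Set (Ω → ℝ)) (φ : (Ω → ℝ) → EReal) (Y : Ω → ℝ) : EReal :=
  ⨆ X ∈ 𝒳, (((∫ ω, X ω * Y ω ∂P : ℝ) : EReal) - φ X)

/-- The recession cone `C^∞ = {X ∈ 𝒳 : {X} + C ⊆ C}`. -/
def recCone (𝒳 C : Set (Ω → ℝ)) : Set (Ω → ℝ) :=
  {X | X ∈ 𝒳 ∧ ∀ U ∈ C, (fun ω => X ω + U ω) ∈ C}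

/-- A functional on `𝒳` is law invariant. -/
def LawInvariantFn (P : Measure Ω) (𝒳 : Set (Ω → ℝ)) (φ : (Ω → ℝ) → EReal) : Prop :=
  ∀ X ∈ 𝒳, ∀ Y ∈ 𝒳, SameLaw P X Y → φ X = φ Y

/-- A set of random variables is law invariant. -/
def LawInvariantSet (P : Measure Ω) (C : Set (Ω → ℝ)) : Prop :=
  ∀ X ∈ C, ∀ Y : Ω → ℝ, Measurable Y → SameLaw P Y X → Y ∈ C

/-- A functional on `𝒳` is expectation invariant. -/
def ExpectationInvariantFn (P : Measure Ω) (𝒳 : Set (Ω → ℝ)) (φ : (Ω → ℝ) → EReal) : Prop :=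
  ∀ X ∈ 𝒳, ∀ Y ∈ 𝒳, (∫ ω, X ω ∂P) = (∫ ω, Y ω ∂P) → φ X = φ Y

/-- Convexity of a functional `φ : 𝒳 → (-∞, ∞]`. -/
def ConvexFn (𝒳 : Set (Ω → ℝ)) (φ : (Ω → ℝ) → EReal) : Prop :=
  ∀ X ∈ 𝒳, ∀ Y ∈ 𝒳, ∀ l : ℝ, l ∈ Set.Icc (0:ℝ) 1 →
    φ (fun ω => l * X ω + (1 - l) * Y ω) ≤ (l : EReal) * φ X + ((1 - l : ℝ) : EReal) * φ Y

/-- Quasiconvexity of a functional `φ : 𝒳 → (-∞, ∞]`. -/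
def QuasiconvexFn (𝒳 : Set (Ω → ℝ)) (φ : (Ω → ℝ) → EReal) : Prop :=
  ∀ X ∈ 𝒳, ∀ Y ∈ 𝒳, ∀ l : ℝ, l ∈ Set.Icc (0:ℝ) 1 →
    φ (fun ω => l * X ω + (1 - l) * Y ω) ≤ max (φ X) (φ Y)

/-- Convexity of a set of random variables. -/
def ConvexSet (C : Set (Ω → ℝ)) : Prop :=
  ∀ X ∈ C, ∀ Y ∈ C, ∀ l : ℝ, l ∈ Set.Icc (0:ℝ) 1 →
    (fun ω => l * X ω + (1 - l) * Y ω) ∈ C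

/-- The expectation of `Z` as an extended real number,
`E[Z] = ∫ Z⁺ dP - ∫ Z⁻ dP` computed in `EReal`. -/
def eExp (P : Measure Ω) (Z : Ω → ℝ) : EReal :=
  ((∫⁻ ω, ENNReal.ofReal (Z ω) ∂P : ℝ≥0∞) : EReal) -
    ((∫⁻ ω, ENNReal.ofReal (-(Z ω)) ∂P : ℝ≥0∞) : EReal)

/-- `X` dominates `Y` in the increasing convex (second-order stochastic dominance) sense:
`E[f(X)] ≥ E[f(Y)]` for every nondecreasing convex `f : ℝ → ℝ`. -/
def SSDdom (P : Measure Ω) (X Y : Ω → ℝ) : Prop :=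
  ∀ f : ℝ → ℝ, Monotone f → ConvexOn ℝ Set.univ f →
    eExp P (fun ω => f (Y ω)) ≤ eExp P (fun ω => f (X ω))

/-- A consistent risk measure on `𝒳`: a proper, cash-additive, normalised functional
that is consistent with second-order stochastic dominance. -/
def IsConsistentRM (P : Measure Ω) (𝒳 : Set (Ω → ℝ)) (φ : (Ω → ℝ) → EReal) : Prop :=
  (∀ X ∈ 𝒳, φ X ≠ (⊥ : EReal)) ∧
  (∃ X ∈ 𝒳, φ X ≠ (⊤ : EReal)) ∧
  (∀ X ∈ 𝒳, ∀ m : ℝ, φ (fun ω => X ω + m) = φ X + (m : EReal)) ∧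
  (∀ X ∈ 𝒳, ∀ Y ∈ 𝒳, SSDdom P X Y → φ Y ≤ φ X) ∧
  φ (fun _ => (0:ℝ)) = (0 : EReal)

/-- A capacity on `(Ω, F)`. -/
structure Capacity (Ω : Type*) [MeasurableSpace Ω] where
  toFun : Set Ω → ℝ
  empty' : toFun ∅ = 0
  univ' : toFun Set.univ = 1
  mono' : ∀ ⦃A B : Set Ω⦄, MeasurableSet A → MeasurableSet B → A ⊆ B → toFun A ≤ toFun B
  nonneg' : ∀ A : Set Ω, MeasurableSet A → 0 ≤ toFun A
  le_one' : ∀ A : Set Ω, MeasurableSet A → toFun A ≤ 1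

/-- A capacity is coherent if it is the upper envelope of a family of probability measures. -/
def Capacity.Coherent (ν : Capacity Ω) : Prop :=
  ∃ Q : Set (Measure Ω), Q.Nonempty ∧ (∀ m ∈ Q, IsProbabilityMeasure m) ∧
    ∀ A : Set Ω, MeasurableSet A → ν.toFun A = ⨆ m ∈ Q, (m A).toReal

/-- A capacity is law invariant (with respect to `P`). -/
def Capacity.LawInvariant (P : Measure Ω) (μ : Capacity Ω) : Prop :=
  ∀ A B : Set Ω, MeasurableSet A → MeasurableSet B → P A = P B → μ.toFun A = μ.toFun B

/-- `μ` is the Jaffray-Philippe capacity represented by the pair `(ν, α)`: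
`μ = α ν + (1 - α) ν̄` with `ν` coherent and `α ∈ [0,1]`,
where `ν̄(A) = 1 - ν(Aᶜ)` is the dual capacity. -/
def IsJPRep (μ ν : Capacity Ω) (α : ℝ) : Prop :=
  ν.Coherent ∧ α ∈ Set.Icc (0:ℝ) 1 ∧
    ∀ A : Set Ω, MeasurableSet A → μ.toFun A = α * ν.toFun A + (1 - α) * (1 - ν.toFun Aᶜ)

/-- The Choquet integral `E_μ[X] = ∫_{-∞}^0 (μ(X > s) - 1) ds + ∫_0^∞ μ(X > s) ds`. -/
def choquet (μ : Capacity Ω) (X : Ω → ℝ) : ℝ :=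
  (∫ s in Set.Iio (0:ℝ), (μ.toFun {ω | s < X ω} - 1)) +
    ∫ s in Set.Ici (0:ℝ), μ.toFun {ω | s < X ω}

/-- `X` is an optimal solution of: maximise `φ` over `C` subject to `E[D X] = p`. -/
def IsOptimal (P : Measure Ω) (φ : (Ω → ℝ) → EReal) (C : Set (Ω → ℝ)) (D : Ω → ℝ)
    (p : ℝ) (X : Ω → ℝ) : Prop :=
  X ∈ C ∧ (∫ ω, D ω * X ω ∂P) = p ∧
    ∀ X' ∈ C, (∫ ω, D ω * X' ω ∂P) = p → φ X' ≤ φ X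

/-- A set of random variables is increasing. -/
def IncreasingSet (C : Set (Ω → ℝ)) : Prop :=
  ∀ X ∈ C, ∀ m : ℝ, 0 ≤ m → (fun ω => X ω + m) ∈ C

/-- `φ` is weakly increasing: `φ(X + m) ≥ φ(X)` for `m ≥ 0`. -/
def WeaklyIncreasingFn (𝒳 : Set (Ω → ℝ)) (φ : (Ω → ℝ) → EReal) : Prop :=
  ∀ X ∈ 𝒳, ∀ m : ℝ, 0 ≤ m → φ X ≤ φ (fun ω => X ω + m)

/-- `φ` is increasing: `φ(X + m) > φ(X)` whenever `φ(X) ∈ ℝ` and `m > 0`. -/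
def IncreasingFn (𝒳 : Set (Ω → ℝ)) (φ : (Ω → ℝ) → EReal) : Prop :=
  ∀ X ∈ 𝒳, (φ X ≠ (⊤ : EReal) ∧ φ X ≠ (⊥ : EReal)) → ∀ m : ℝ, 0 < m →
    φ X < φ (fun ω => X ω + m)


/-! ### Extended expectations and second-order stochastic dominance -/

lemma eExp_mono_ae (P : Measure Ω) {F G : Ω → ℝ} (h : ∀ᵐ ω ∂P, F ω ≤ G ω) :
    eExp P F ≤ eExp P G := by
  unfold eExp
  apply EReal.sub_le_sub
  · rw [EReal.coe_ennreal_le_coe_ennreal_iff]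
    apply lintegral_mono_ae
    filter_upwards [h] with ω hω
    exact ENNReal.ofReal_le_ofReal hω
  · rw [EReal.coe_ennreal_le_coe_ennreal_iff]
    apply lintegral_mono_ae
    filter_upwards [h] with ω hω
    exact ENNReal.ofReal_le_ofReal (neg_le_neg hω)

lemma eExp_of_integrable (P : Measure Ω) {F : Ω → ℝ} (h : Integrable F P) :
    eExp P F = ((∫ ω, F ω ∂P : ℝ) : EReal) := by
  have h1 : (∫⁻ ω, ENNReal.ofReal (F ω) ∂P) ≠ ∞ := h.lintegral_lt_top.ne
  have h2 : (∫⁻ ω, ENNReal.ofReal (-(F ω)) ∂P) ≠ ∞ := h.neg.lintegral_lt_top.ne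
  unfold eExp
  rw [integral_eq_lintegral_pos_part_sub_lintegral_neg_part h, EReal.coe_sub,
    EReal.coe_ennreal_toReal h1, EReal.coe_ennreal_toReal h2]

lemma three_point {f : ℝ → ℝ} (hf : ConvexOn ℝ Set.univ f) {a b c : ℝ}
    (hab : a ≤ b) (hbc : b ≤ c) : (c - a) * f b ≤ (c - b) * f a + (b - a) * f c := by
  rcases (hab.trans hbc).eq_or_lt with h | h
  · subst h
    have : b = a := le_antisymm hbc hab
    subst this
    simp
  · have hca : 0 < c - a := by linarith
    have h1 : 0 ≤ (c - b) / (c - a) := div_nonneg (by linarith) hca.le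
    have h2 : 0 ≤ (b - a) / (c - a) := div_nonneg (by linarith) hca.le
    have := hf.2 (mem_univ a) (mem_univ c) h1 h2
      (by rw [← add_div, div_eq_one_iff_eq hca.ne']; ring)
    have e : ((c - b) / (c - a)) • a + ((b - a) / (c - a)) • c = b := by
      simp only [smul_eq_mul]; field_simp; ring
    rw [e] at this
    simp only [smul_eq_mul] at this
    have h3 := mul_le_mul_of_nonneg_left this hca.le
    have e2 : (c - a) * ((c - b) / (c - a) * f a + (b - a) / (c - a) * f c)
      = (c - b) * f a + (b - a) * f c := by field_simp
    linarith

/-- Jensen's inequality, in the form that covers convex `f` with `f ∘ X` not integrable. -/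
lemma ssd_mean (P : Measure Ω) [IsProbabilityMeasure P] {X : Ω → ℝ} (hX : Integrable X P) :
    SSDdom P X (fun _ => ∫ ω, X ω ∂P) := by
  intro f _ hf
  rw [eExp_of_integrable P (integrable_const _)]
  simp only [integral_const, probReal_univ, smul_eq_mul, one_mul]
  refine le_of_forall_lt fun a ha => ?_
  obtain ⟨b, hab, hb⟩ := EReal.lt_iff_exists_real_btwn.1 ha
  refine hab.trans_le ?_
  obtain ⟨l, c, hle, heq⟩ := hf.exists_affine_le_of_lt_real (x := ∫ ω, X ω ∂P) (a := b)
    (mem_univ _) (EReal.coe_lt_coe_iff.1 hb) isClosed_univ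
    ((hf.continuousOn isOpen_univ).lowerSemicontinuousOn)
  have hi : Integrable (fun ω => l * X ω + c) P := (hX.const_mul l).add (integrable_const c)
  have hint : ∫ ω, (l * X ω + c) ∂P = b := by
    rw [integral_add (hX.const_mul l) (integrable_const c), integral_const_mul]
    simp only [integral_const, probReal_univ, smul_eq_mul, one_mul]
    exact heq
  rw [← hint, ← eExp_of_integrable P hi]
  exact eExp_mono_ae P (Filter.Eventually.of_forall fun ω => hle (X ω) (mem_univ _))

/-- A centred variable whose positive part has large enough mean dominates every centred
variable bounded by `M`. Indeed the chord of `f` over `[-M, M]` gives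
`E[f(X)] ≤ (f(M) + f(-M)) / 2`, whereas the two chords over `[-M, 0]` and `[0, M]`, of slopes
`q ≤ p`, give `f(y) ≥ f(0) + q y + (p - q) (y⁺ - M)` for all `y`. -/
lemma ssd_of_bounded (P : Measure Ω) [IsProbabilityMeasure P] {X V : Ω → ℝ} {M : ℝ}
    (hM : 0 < M) (hX : Integrable X P) (hV : Integrable V P)
    (hX0 : ∫ ω, X ω ∂P = 0) (hV0 : ∫ ω, V ω ∂P = 0) (hb : ∀ᵐ ω ∂P, |X ω| ≤ M)
    (hVM : 3 / 2 * M ≤ ∫ ω, max (V ω) 0 ∂P) : SSDdom P V X := by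
  intro f _ hf
  obtain ⟨p, hp⟩ : ∃ p, p * M = f M - f 0 := ⟨(f M - f 0) / M, by field_simp⟩
  obtain ⟨q, hq⟩ : ∃ q, q * M = f 0 - f (-M) := ⟨(f 0 - f (-M)) / M, by field_simp⟩
  have hpq : q ≤ p := by
    have := three_point hf (a := -M) (b := 0) (c := M) (by linarith) hM.le
    have h2 : M * (q * M) ≤ M * (p * M) := by rw [hp, hq]; nlinarith
    exact le_of_mul_le_mul_right (le_of_mul_le_mul_left h2 hM) hM
  have hlow : ∀ y, f 0 + q * y + (p - q) * (max y 0 - M) ≤ f y := by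
    intro y
    refine le_of_mul_le_mul_left ?_ hM
    have hMM : 0 ≤ (p - q) * M * M := by
      have := sub_nonneg.2 hpq
      positivity
    rcases le_total 0 y with hy | hy
    · rw [max_eq_left hy]
      rcases le_total M y with hyM | hyM
      · have := three_point hf (a := 0) (b := M) (c := y) hM.le hyM
        have e : f M = f 0 + p * M := by linarith
        rw [e] at this
        nlinarith
      · have := three_point hf (a := -M) (b := 0) (c := y) (by linarith) hy
        have e : f (-M) = f 0 - q * M := by linarith
        rw [e] at this
        nlinarith [mul_nonneg (mul_nonneg (sub_nonneg.2 hpq) hM.le) (sub_nonneg.2 hyM)]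
    · rw [max_eq_right hy]
      rcases le_total (-M) y with hyM | hyM
      · have := three_point hf (a := y) (b := 0) (c := M) hy hM.le
        have e : f M = f 0 + p * M := by linarith
        rw [e] at this
        nlinarith [mul_nonneg (mul_nonneg (sub_nonneg.2 hpq) hM.le) (by linarith : 0 ≤ y + M)]
      · have := three_point hf (a := y) (b := -M) (c := 0) hyM (by linarith)
        have e : f (-M) = f 0 - q * M := by linarith
        rw [e] at this
        nlinarith
  have hupp : ∀ᵐ ω ∂P, f (X ω) ≤ (f M + f (-M)) / 2 + (p + q) / 2 * X ω := by
    filter_upwards [hb] with ω hω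
    obtain ⟨h1, h2⟩ := abs_le.1 hω
    refine le_of_mul_le_mul_left ?_ hM
    have := three_point hf h1 h2
    have e : f (-M) = f 0 - q * M := by linarith
    have e' : f M = f 0 + p * M := by linarith
    rw [e, e'] at this ⊢
    nlinarith
  have hVp : Integrable (fun ω => max (V ω) 0) P := hV.pos_part
  have i1 : Integrable (fun ω => (f M + f (-M)) / 2 + (p + q) / 2 * X ω) P :=
    (integrable_const _).add (hX.const_mul _)
  have i3 : Integrable (fun ω => (p - q) * (max (V ω) 0 - M)) P :=
    (hVp.sub (integrable_const M)).const_mul _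
  have i4 : Integrable (fun ω => f 0 + q * V ω) P := (integrable_const _).add (hV.const_mul _)
  have i5 : Integrable (fun ω => f 0 + q * V ω + (p - q) * (max (V ω) 0 - M)) P := i4.add i3
  refine (eExp_mono_ae P hupp).trans (le_trans ?_
    (eExp_mono_ae P (Filter.Eventually.of_forall fun ω => hlow (V ω))))
  rw [eExp_of_integrable P i1, eExp_of_integrable P i5, EReal.coe_le_coe_iff,
    integral_add (integrable_const _) (hX.const_mul _), integral_add i4 i3,
    integral_add (integrable_const _) (hV.const_mul _), integral_const_mul, integral_const_mul,
    integral_const_mul, integral_sub hVp (integrable_const M), hX0, hV0]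
  simp only [integral_const, probReal_univ, smul_eq_mul, one_mul]
  nlinarith [mul_le_mul_of_nonneg_left hVM (sub_nonneg.2 hpq)]

lemma integral_abs_eq_two_mul_pos (P : Measure Ω) {W : Ω → ℝ} (hW : Integrable W P)
    (hW0 : ∫ ω, W ω ∂P = 0) : ∫ ω, |W ω| ∂P = 2 * ∫ ω, max (W ω) 0 ∂P := by
  have e : ∀ ω, |W ω| = 2 * max (W ω) 0 - W ω := by
    intro ω
    rcases le_total 0 (W ω) with h | h
    · rw [abs_of_nonneg h, max_eq_left h]; ring
    · rw [abs_of_nonpos h, max_eq_right h]; ring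
  simp_rw [e]
  rw [integral_sub (hW.pos_part.const_mul 2) hW, hW0, integral_const_mul, sub_zero]

lemma pos_part_integral_pos (P : Measure Ω) {U : Ω → ℝ} (hU : Integrable U P)
    (hU0 : ∫ ω, U ω ∂P = 0) (hn : Nonconstant P U) : 0 < ∫ ω, max (U ω) 0 ∂P := by
  have h := integral_abs_eq_two_mul_pos P hU hU0
  have h0 : 0 ≤ ∫ ω, |U ω| ∂P := integral_nonneg fun ω => abs_nonneg _
  rcases h0.eq_or_lt with h1 | h1
  · exfalso
    apply hn 0
    have := (integral_eq_zero_iff_of_nonneg (fun ω => abs_nonneg (U ω)) hU.abs).1 h1.symm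
    filter_upwards [this] with ω hω
    simpa using hω
  · linarith

/-- On an atomless space there is a nonconstant centred variable with values in `[-1, 1]`:
a centred indicator. -/
lemma exists_centred (P : Measure Ω) [IsProbabilityMeasure P] (hP : IsAtomless P) :
    ∃ U : Ω → ℝ, Measurable U ∧ (∀ ω, |U ω| ≤ 1) ∧ Nonconstant P U ∧ ∫ ω, U ω ∂P = 0 := by
  obtain ⟨B, hB, -, hB0, hB1⟩ := hP Set.univ MeasurableSet.univ (by simp)
  have hb0 : 0 < P.real B := ENNReal.toReal_pos hB0.ne' (measure_ne_top _ _)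
  have hb1 : P.real B < 1 := by
    have := (ENNReal.toReal_lt_toReal (measure_ne_top _ _) (measure_ne_top _ _)).2 hB1
    simpa [Measure.real] using this
  have hm : Measurable (B.indicator (fun _ => (1:ℝ))) := measurable_const.indicator hB
  refine ⟨fun ω => B.indicator (fun _ => (1:ℝ)) ω - P.real B, hm.sub_const _, ?_, ?_, ?_⟩
  · intro ω
    dsimp only
    by_cases h : ω ∈ B
    · rw [indicator_of_mem h, abs_le]; constructor <;> linarith
    · rw [indicator_of_notMem h, abs_le]; constructor <;> linarith
  · intro c hc
    -- `U` takes the values `1 - P(B)` on `B` and `-P(B)` off `B`, both with positive probability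
    by_cases h : c = 1 - P.real B
    · have : P Bᶜ = 0 := by
        refine measure_mono_null (fun ω hω => ?_) hc
        simp only [mem_compl_iff, mem_ofPred_eq]
        rw [indicator_of_notMem hω, h]
        intro hh; linarith
      rw [prob_compl_eq_zero_iff hB] at this
      simp [this] at hB1
    · have : P B = 0 := by
        refine measure_mono_null (fun ω hω => ?_) hc
        simp only [mem_compl_iff, mem_ofPred_eq]
        rw [indicator_of_mem hω]
        exact fun hh => h hh.symm
      exact hB0.ne' this
  · rw [integral_sub ((integrable_const 1).indicator hB) (integrable_const _)]
    simp [integral_indicator_const, hB]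

/-! ### Consequences for consistent risk measures -/

section RiskMeasure

variable {P : Measure Ω} {pr : PairedSpaces P} {φ : (Ω → ℝ) → EReal}

lemma const_mem (pr : PairedSpaces P) (c : ℝ) : (fun _ : Ω => c) ∈ pr.carrier :=
  pr.linf_carrier _ ⟨measurable_const, |c|, Filter.Eventually.of_forall fun _ => le_rfl⟩

lemma shift_mem {X : Ω → ℝ} (hX : X ∈ pr.carrier) (c : ℝ) :
    (fun ω => X ω + c) ∈ pr.carrier :=
  pr.add_carrier X hX _ (const_mem pr c)

lemma le_of_weak_tendsto (hlsc : WeakLSC P pr φ) {X : Ω → ℝ} (hX : X ∈ pr.carrier)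
    {S : ℕ → Ω → ℝ} (hS : ∀ n, S n ∈ pr.carrier) {m : ℝ} (hm : ∀ n, φ (S n) ≤ m)
    (hlim : ∀ Y ∈ pr.dual, Filter.Tendsto (fun n => ∫ ω, S n ω * Y ω ∂P) Filter.atTop
      (nhds (∫ ω, X ω * Y ω ∂P))) : φ X ≤ m := by
  let _ : TopologicalSpace ↥pr.carrier := TopologicalSpace.induced
      (fun X : ↥pr.carrier => (fun Y : ↥pr.dual => ∫ ω, (X : Ω → ℝ) ω * (Y : Ω → ℝ) ω ∂P))
      Pi.topologicalSpace
  have hc : IsClosed {X : ↥pr.carrier | (X : Ω → ℝ) ∈ {X | X ∈ pr.carrier ∧ φ X ≤ (m : EReal)}} :=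
    hlsc m
  have ht : Filter.Tendsto (fun n => (⟨S n, hS n⟩ : ↥pr.carrier)) Filter.atTop
      (nhds ⟨X, hX⟩) := by
    rw [nhds_induced, Filter.tendsto_comap_iff, tendsto_pi_nhds]
    exact fun Y => hlim Y Y.2
  exact (hc.mem_of_tendsto ht (Filter.Eventually.of_forall fun n => ⟨hS n, hm n⟩)).2

lemma phi_eq_centred (hcrm : IsConsistentRM P pr.carrier φ) {X : Ω → ℝ} (hX : X ∈ pr.carrier) :
    φ X = φ (fun ω => X ω + -(∫ ω, X ω ∂P)) + ((∫ ω, X ω ∂P : ℝ) : EReal) := by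
  have := hcrm.2.2.1 _ (shift_mem hX (-(∫ ω, X ω ∂P))) (∫ ω, X ω ∂P)
  rw [← this]
  congr 1
  ext ω
  ring

variable [IsProbabilityMeasure P]

lemma phi_ge_mean (hcrm : IsConsistentRM P pr.carrier φ) {X : Ω → ℝ} (hX : X ∈ pr.carrier) :
    ((∫ ω, X ω ∂P : ℝ) : EReal) ≤ φ X := by
  obtain ⟨-, -, hcash, hssd, h0⟩ := hcrm
  have h1 := hssd X hX _ (const_mem pr _) (ssd_mean P (pr.int_carrier X hX))
  have h2 := hcash _ (const_mem pr 0) (∫ ω, X ω ∂P)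
  rw [h0] at h2
  simp only [zero_add] at h2
  rwa [h2] at h1

lemma centred_integral {X : Ω → ℝ} (hX : X ∈ pr.carrier) :
    ∫ ω, (X ω + -(∫ ω, X ω ∂P)) ∂P = 0 := by
  rw [integral_add (pr.int_carrier X hX) (integrable_const _)]
  simp

/-- Truncations converge weakly, by dominated convergence, and stay weakly convergent after
centring; so lower semicontinuity extends a bound from bounded centred variables to all of them. -/
lemma phi_nonpos_of_bounded (hlsc : WeakLSC P pr φ)
    (hbdd : ∀ X ∈ pr.carrier, ∀ M : ℝ, (∀ ω, |X ω| ≤ M) → ∫ ω, X ω ∂P = 0 → φ X ≤ 0)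
    {X : Ω → ℝ} (hX : X ∈ pr.carrier) (hX0 : ∫ ω, X ω ∂P = 0) : φ X ≤ 0 := by
  have hXm := pr.meas_carrier X hX
  set T : ℕ → Ω → ℝ := fun n => {ω | |X ω| ≤ n}.indicator X with hT
  have hset : ∀ n : ℕ, MeasurableSet {ω | |X ω| ≤ n} := fun n =>
    measurableSet_le hXm.abs measurable_const
  have hTm : ∀ n, Measurable (T n) := fun n => hXm.indicator (hset n)
  have hTb : ∀ n ω, |T n ω| ≤ n := by
    intro n ω
    by_cases h : |X ω| ≤ n
    · simp only [hT]
      rwa [indicator_of_mem (s := {ω | |X ω| ≤ n}) h]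
    · simp only [hT]
      rw [indicator_of_notMem (s := {ω | |X ω| ≤ n}) h]; simp
  have hTX : ∀ n ω, |T n ω| ≤ |X ω| := by
    intro n ω
    by_cases h : |X ω| ≤ n
    · simp only [hT]
      rw [indicator_of_mem (s := {ω | |X ω| ≤ n}) h]
    · simp only [hT]
      rw [indicator_of_notMem (s := {ω | |X ω| ≤ n}) h]; simp
  have hTmem : ∀ n, T n ∈ pr.carrier := fun n =>
    pr.linf_carrier _ ⟨hTm n, n, Filter.Eventually.of_forall (hTb n)⟩
  have hlim : ∀ Y ∈ pr.dual, Filter.Tendsto (fun n => ∫ ω, T n ω * Y ω ∂P) Filter.atTop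
      (nhds (∫ ω, X ω * Y ω ∂P)) := by
    intro Y hY
    refine tendsto_integral_of_dominated_convergence (fun ω => |X ω * Y ω|)
      (fun n => ((hTm n).mul (pr.meas_dual Y hY)).aestronglyMeasurable)
      (pr.mul_int X hX Y hY).abs (fun n => Filter.Eventually.of_forall fun ω => ?_)
      (Filter.Eventually.of_forall fun ω => ?_)
    · rw [Real.norm_eq_abs, abs_mul, abs_mul]
      exact mul_le_mul_of_nonneg_right (hTX n ω) (abs_nonneg _)
    · obtain ⟨N, hN⟩ := exists_nat_ge |X ω|
      refine tendsto_const_nhds.congr' ?_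
      filter_upwards [Filter.eventually_ge_atTop N] with n hn
      have h : |X ω| ≤ n := hN.trans (by exact_mod_cast hn)
      simp only [hT]
      rw [indicator_of_mem (s := {ω | |X ω| ≤ n}) h]
  have hone : (fun _ : Ω => (1:ℝ)) ∈ pr.dual :=
    pr.linf_dual _ ⟨measurable_const, 1, Filter.Eventually.of_forall fun _ => by simp⟩
  have hmean : Filter.Tendsto (fun n => ∫ ω, T n ω ∂P) Filter.atTop (nhds 0) := by
    have := hlim _ hone
    simpa [hX0] using this
  refine le_of_weak_tendsto (m := 0) hlsc hX
    (S := fun n ω => T n ω + -(∫ ω, T n ω ∂P)) (fun n => shift_mem (hTmem n) _) (fun n => ?_) ?_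
  · refine hbdd _ (shift_mem (hTmem n) _) (n + |∫ ω, T n ω ∂P|) (fun ω => ?_)
      (centred_integral (hTmem n))
    refine (abs_add_le _ _).trans ?_
    rw [abs_neg]
    linarith [hTb n ω]
  · intro Y hY
    have e : ∀ n, ∫ ω, (T n ω + -(∫ ω, T n ω ∂P)) * Y ω ∂P
        = ∫ ω, T n ω * Y ω ∂P - (∫ ω, T n ω ∂P) * ∫ ω, Y ω ∂P := by
      intro n
      rw [← integral_const_mul, ← integral_sub (pr.mul_int _ (hTmem n) Y hY)
        ((pr.int_dual Y hY).const_mul _)]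
      congr 1
      ext ω
      ring
    simp_rw [e]
    simpa using (hlim Y hY).sub (hmean.mul_const (∫ ω, Y ω ∂P))

lemma mean_of_flat_ray (hcrm : IsConsistentRM P pr.carrier φ) (hlsc : WeakLSC P pr φ)
    {U : Ω → ℝ} (hU : U ∈ pr.carrier) (hn : Nonconstant P U) (hU0 : ∫ ω, U ω ∂P = 0)
    (hray : ∀ t : ℝ, 0 ≤ t → φ (fun ω => t * U ω) ≤ 0) :
    ∀ X ∈ pr.carrier, φ X = ((∫ ω, X ω ∂P : ℝ) : EReal) := by
  have he := pos_part_integral_pos P (pr.int_carrier U hU) hU0 hn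
  set e := ∫ ω, max (U ω) 0 ∂P with hedef
  intro X hX
  refine le_antisymm ?_ (phi_ge_mean hcrm hX)
  rw [phi_eq_centred hcrm hX]
  have key : φ (fun ω => X ω + -(∫ ω, X ω ∂P)) ≤ 0 := by
    refine phi_nonpos_of_bounded hlsc (fun Z hZ M hM hZ0 => ?_) (shift_mem hX _)
      (centred_integral hX)
    have hM' : (0:ℝ) < |M| + 1 := by positivity
    set t := 3 / 2 * (|M| + 1) / e with ht
    have ht0 : 0 ≤ t := by positivity
    refine (hcrm.2.2.2.1 _ (pr.smul_carrier U hU t) Z hZ ?_).trans (hray t ht0)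
    refine ssd_of_bounded P hM' (pr.int_carrier Z hZ) ((pr.int_carrier U hU).const_mul t) hZ0
      (by rw [integral_const_mul, hU0, mul_zero])
      (Filter.Eventually.of_forall fun ω => (hM ω).trans (by linarith [le_abs_self M])) ?_
    have : ∀ ω, max (t * U ω) 0 = t * max (U ω) 0 := fun ω => by
      rw [mul_max_of_nonneg _ _ ht0, mul_zero]
    simp_rw [this]
    rw [integral_const_mul, ← hedef, ht]
    field_simp
    exact le_rfl
  calc _ ≤ (0 : EReal) + ((∫ ω, X ω ∂P : ℝ) : EReal) := add_le_add_left key _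
    _ = _ := zero_add _

/-- If `φ` grows at least linearly along the ray of a bounded centred `U`, then by dominance it
grows at least linearly in `E[(X - E[X])⁺]`, so that `1 + η U` has finite conjugate for
`η = c / (3 t)`. -/
lemma conj_lt_top (hcrm : IsConsistentRM P pr.carrier φ)
    {U : Ω → ℝ} (hU : U ∈ pr.carrier) (hUb : ∀ ω, |U ω| ≤ 1) (hU0 : ∫ ω, U ω ∂P = 0)
    {t c : ℝ} (ht : 0 < t) (hc : 0 < c)
    (hgrow : ∀ s : ℝ, t ≤ s → ((s / t * c : ℝ) : EReal) ≤ φ (fun ω => s * U ω)) :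
    conj P pr.carrier φ (fun ω => 1 + c / (3 * t) * U ω) < ⊤ := by
  set η := c / (3 * t) with hη
  have hη0 : 0 < η := by positivity
  refine lt_of_le_of_lt (b := (c : EReal)) ?_ (EReal.coe_lt_top c)
  refine iSup₂_le fun X hX => ?_
  have hXi := pr.int_carrier X hX
  have hUi := pr.int_carrier U hU
  have hUm := pr.meas_carrier U hU
  have hUd : U ∈ pr.dual := pr.linf_dual U ⟨hUm, 1, Filter.Eventually.of_forall hUb⟩
  set m := ∫ ω, X ω ∂P with hm
  set W : Ω → ℝ := fun ω => X ω + -m with hW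
  have hWmem : W ∈ pr.carrier := shift_mem hX _
  have hW0 : ∫ ω, W ω ∂P = 0 := centred_integral hX
  have hWi := pr.int_carrier W hWmem
  set e := ∫ ω, max (W ω) 0 ∂P with he
  have hpair : ∫ ω, X ω * (1 + η * U ω) ∂P ≤ m + 2 * η * e := by
    have e1 : ∀ ω, X ω * (1 + η * U ω) = X ω + η * (W ω * U ω) + η * m * U ω := by
      intro ω; simp only [hW]; ring
    simp_rw [e1]
    have iWU := pr.mul_int W hWmem U hUd
    have i1 : Integrable (fun ω => X ω + η * (W ω * U ω)) P := hXi.add (iWU.const_mul η)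
    rw [integral_add i1 (hUi.const_mul _),
      integral_add hXi (iWU.const_mul η), integral_const_mul, integral_const_mul, hU0, mul_zero,
      add_zero]
    have : ∫ ω, W ω * U ω ∂P ≤ 2 * e := by
      rw [he, ← integral_abs_eq_two_mul_pos P hWi hW0]
      refine integral_mono iWU hWi.abs fun ω => ?_
      refine (le_abs_self _).trans ?_
      simp only [abs_mul]
      exact mul_le_of_le_one_right (abs_nonneg _) (hUb ω)
    nlinarith
  have hphi : ((m + 2 * η * e - c : ℝ) : EReal) ≤ φ X := by
    rcases le_total t (2 / 3 * e) with h | h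
    · have hs : 0 < 2 / 3 * e := ht.trans_le h
      have hdom : φ (fun ω => 2 / 3 * e * U ω) ≤ φ W := by
        refine hcrm.2.2.2.1 W hWmem _ (pr.smul_carrier U hU _) ?_
        refine ssd_of_bounded P hs (hUi.const_mul _) hWi
          (by rw [integral_const_mul, hU0, mul_zero]) hW0
          (Filter.Eventually.of_forall fun ω => ?_) (by rw [← he]; linarith)
        rw [abs_mul, abs_of_pos hs]
        exact mul_le_of_le_one_right hs.le (hUb ω)
      have h1 := (hgrow _ h).trans hdom
      rw [phi_eq_centred hcrm hX]
      calc ((m + 2 * η * e - c : ℝ) : EReal)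
          ≤ ((2 / 3 * e / t * c + m : ℝ) : EReal) := by
            rw [EReal.coe_le_coe_iff]
            have : 2 / 3 * e / t * c = 2 * η * e := by rw [hη]; field_simp
            linarith
        _ = ((2 / 3 * e / t * c : ℝ) : EReal) + (m : EReal) := EReal.coe_add _ _
        _ ≤ _ := add_le_add_left h1 _
    · refine le_trans ?_ (phi_ge_mean hcrm hX)
      rw [EReal.coe_le_coe_iff]
      have h3 : 2 * η * e ≤ c := by
        calc 2 * η * e = 3 * η * (2 / 3 * e) := by ring
          _ ≤ 3 * η * t := by gcongr
          _ = c := by rw [hη]; field_simp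
      linarith
  calc _ ≤ ((m + 2 * η * e : ℝ) : EReal) - ((m + 2 * η * e - c : ℝ) : EReal) :=
        EReal.sub_le_sub (EReal.coe_le_coe_iff.2 hpair) hphi
    _ = (c : EReal) := by rw [← EReal.coe_sub]; congr 1; ring

/-- For `φ = E`, the conjugate at `Y` is the supremum of the linear functional
`X ↦ E[X (Y - 1)]`, finite only if it vanishes. -/
lemma conj_mean (hφ : ∀ X ∈ pr.carrier, φ X = ((∫ ω, X ω ∂P : ℝ) : EReal))
    {Y : Ω → ℝ} (hY : Y ∈ pr.dual) :
    conj P pr.carrier φ Y < ⊤ ↔ Y =ᵐ[P] fun _ => (1:ℝ) := by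
  have hYm := pr.meas_dual Y hY
  have hYi := pr.int_dual Y hY
  constructor
  · intro h
    by_contra hne
    set D : Ω → ℝ := fun ω => Y ω - 1 with hD
    have hDi : Integrable D P := hYi.sub (integrable_const 1)
    have hpos : 0 < ∫ ω, |D ω| ∂P := by
      have h0 : 0 ≤ ∫ ω, |D ω| ∂P := integral_nonneg fun ω => abs_nonneg (D ω)
      rcases h0.eq_or_lt with h1 | h1
      · exfalso
        apply hne
        have := (integral_eq_zero_iff_of_nonneg (fun ω => abs_nonneg (D ω)) hDi.abs).1 h1.symm
        filter_upwards [this] with ω hω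
        have : D ω = 0 := by simpa using hω
        simp only [hD] at this
        linarith
      · exact h1
    set I := ∫ ω, |D ω| ∂P with hI
    -- test against multiples of the sign of `Y - 1`
    set G : Ω → ℝ := fun ω => if 0 ≤ D ω then 1 else -1 with hG
    have hGm : Measurable G := Measurable.ite
      (measurableSet_le measurable_const (hYm.sub_const 1)) measurable_const measurable_const
    have hGmem : G ∈ pr.carrier := pr.linf_carrier G ⟨hGm, 1, Filter.Eventually.of_forall
      fun ω => by simp only [hG]; split_ifs <;> simp⟩
    have hGD : ∀ ω, G ω * Y ω - G ω = |D ω| := by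
      intro ω
      have : G ω * Y ω - G ω = G ω * D ω := by simp only [hD]; ring
      rw [this]
      by_cases h0 : 0 ≤ D ω
      · simp only [hG, if_pos h0, abs_of_nonneg h0, one_mul]
      · simp only [hG, if_neg h0, abs_of_neg (not_le.1 h0), neg_mul, one_mul]
    have hGI : ∫ ω, G ω * Y ω ∂P - ∫ ω, G ω ∂P = I := by
      rw [← integral_sub (pr.mul_int G hGmem Y hY) (pr.int_carrier G hGmem), hI]
      simp_rw [hGD]
    have hge : ∀ k : ℝ, ((k * I : ℝ) : EReal) ≤ conj P pr.carrier φ Y := by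
      intro k
      have hmem := pr.smul_carrier G hGmem k
      refine le_trans (le_of_eq ?_) (le_iSup₂_of_le (fun ω => k * G ω) hmem le_rfl)
      rw [hφ _ hmem, ← EReal.coe_sub]
      congr 1
      simp_rw [mul_assoc]
      rw [integral_const_mul, integral_const_mul, ← mul_sub, hGI]
    refine h.ne (EReal.eq_top_iff_forall_lt _ |>.2 fun y => ?_)
    refine lt_of_lt_of_le ?_ (hge ((y + 1) / I))
    rw [EReal.coe_lt_coe_iff, div_mul_cancel₀ _ hpos.ne']
    linarith
  · intro h
    refine lt_of_le_of_lt (b := (0 : EReal)) ?_ EReal.zero_lt_top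
    refine iSup₂_le fun X hX => ?_
    have : ∫ ω, X ω * Y ω ∂P = ∫ ω, X ω ∂P := by
      refine integral_congr_ae ?_
      filter_upwards [h] with ω hω
      rw [hω, mul_one]
    rw [this, hφ X hX, ← EReal.coe_sub, sub_self]
    exact le_rfl

end RiskMeasure

/-- collapse to the mean for `σ(𝒳,𝒳*)`-lower semicontinuous consistent
risk measures: (i)-(iii) are equivalent, each implies (iv), and under star-shapedness
all four are equivalent. -/
theorem collapse_consistent
    (P : Measure Ω) [IsProbabilityMeasure P] (hP : IsAtomless P)
    (pr : PairedSpaces P) (φ : (Ω → ℝ) → EReal)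
    (hcrm : IsConsistentRM P pr.carrier φ)
    (hlsc : WeakLSC P pr φ) :
    ([ (∀ X ∈ pr.carrier, φ X = ((∫ ω, X ω ∂P : ℝ) : EReal)),
       (∃ Z ∈ pr.carrier, Nonconstant P Z ∧ ∃ a : ℝ,
          ∀ t : ℝ, φ (fun ω => t * Z ω) = ((a * t : ℝ) : EReal)),
       (∃ U ∈ pr.carrier, Nonconstant P U ∧ (∫ ω, U ω ∂P) = 0 ∧
          ∀ t : ℝ, 0 ≤ t → φ (fun ω => t * U ω) ≤ (0 : EReal)) ].TFAE) ∧
    ((∀ X ∈ pr.carrier, φ X = ((∫ ω, X ω ∂P : ℝ) : EReal)) →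
      ∀ Y ∈ pr.dual,
        (conj P pr.carrier φ Y < (⊤ : EReal) ↔ Y =ᵐ[P] fun _ => (1:ℝ))) ∧
    ((∀ X ∈ pr.carrier, ∀ l : ℝ, l ∈ Set.Icc (0:ℝ) 1 →
        φ (fun ω => l * X ω) ≤ (l : EReal) * φ X) →
      (∀ Y ∈ pr.dual,
        (conj P pr.carrier φ Y < (⊤ : EReal) ↔ Y =ᵐ[P] fun _ => (1:ℝ))) →
      ∀ X ∈ pr.carrier, φ X = ((∫ ω, X ω ∂P : ℝ) : EReal)) := by
  have h31 : (∃ U ∈ pr.carrier, Nonconstant P U ∧ (∫ ω, U ω ∂P) = 0 ∧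
      ∀ t : ℝ, 0 ≤ t → φ (fun ω => t * U ω) ≤ (0 : EReal)) →
      ∀ X ∈ pr.carrier, φ X = ((∫ ω, X ω ∂P : ℝ) : EReal) := by
    rintro ⟨U, hU, hn, hU0, hray⟩
    exact mean_of_flat_ray hcrm hlsc hU hn hU0 hray
  obtain ⟨U, hUm, hUb, hUn, hU0⟩ := exists_centred P hP
  have hU : U ∈ pr.carrier := pr.linf_carrier U ⟨hUm, 1, Filter.Eventually.of_forall hUb⟩
  refine ⟨?_, fun hφ Y hY => conj_mean hφ hY, ?_⟩
  · tfae_have 1 → 2 := by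
      intro h
      refine ⟨U, hU, hUn, 0, fun t => ?_⟩
      rw [h _ (pr.smul_carrier U hU t), integral_const_mul, hU0, mul_zero, zero_mul]
    tfae_have 2 → 3 := by
      rintro ⟨Z, hZ, hZn, a, ha⟩
      have hmean : ∀ t : ℝ, t * (∫ ω, Z ω ∂P) ≤ a * t := by
        intro t
        have := phi_ge_mean hcrm (pr.smul_carrier Z hZ t)
        rwa [ha, integral_const_mul, EReal.coe_le_coe_iff] at this
      have hae : a = ∫ ω, Z ω ∂P := by linarith [hmean 1, hmean (-1)]
      refine ⟨_, shift_mem hZ (-(∫ ω, Z ω ∂P)), ?_, centred_integral hZ, fun t _ => ?_⟩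
      · intro c hc
        refine hZn (c + ∫ ω, Z ω ∂P) ?_
        filter_upwards [hc] with ω hω
        linarith
      · have := hcrm.2.2.1 _ (pr.smul_carrier Z hZ t) (t * -(∫ ω, Z ω ∂P))
        simp_rw [mul_add]
        rw [this, ha, ← EReal.coe_add, hae]
        refine le_of_eq ?_
        rw [← EReal.coe_zero]
        congr 1
        ring
    tfae_have 3 → 1 := h31
    tfae_finish
  · intro hstar hconj
    by_contra hne
    have hno : ∃ t : ℝ, 0 ≤ t ∧ 0 < φ (fun ω => t * U ω) := by
      by_contra hcon
      push Not at hcon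
      exact hne (h31 ⟨U, hU, hUn, hU0, hcon⟩)
    obtain ⟨t, ht0, htφ⟩ := hno
    have ht : 0 < t := by
      rcases ht0.eq_or_lt with h | h
      · subst h
        simp [hcrm.2.2.2.2] at htφ
      · exact h
    obtain ⟨c, hc0, hcφ⟩ := EReal.lt_iff_exists_real_btwn.1 htφ
    have hc : 0 < c := by exact_mod_cast hc0
    have hgrow : ∀ s : ℝ, t ≤ s → ((s / t * c : ℝ) : EReal) ≤ φ (fun ω => s * U ω) := by
      intro s hs
      have hs0 : 0 < s := ht.trans_le hs
      have h1 := hstar _ (pr.smul_carrier U hU s) (t / s)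
        ⟨by positivity, (div_le_one hs0).2 hs⟩
      have e : (fun ω => t / s * (s * U ω)) = fun ω => t * U ω := by
        ext ω; field_simp
      rw [e] at h1
      have h2 := hcφ.le.trans h1
      have hbot := hcrm.1 _ (pr.smul_carrier U hU s)
      generalize φ (fun ω => s * U ω) = v at h2 hbot
      induction v with
      | bot => exact absurd rfl hbot
      | top => exact le_top
      | coe r =>
        rw [← EReal.coe_mul, EReal.coe_le_coe_iff] at h2
        rw [EReal.coe_le_coe_iff]
        calc s / t * c ≤ s / t * (t / s * r) := by gcongr
          _ = r := by field_simp
    have hfin := conj_lt_top hcrm hU hUb hU0 ht hc hgrow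
    have hη : 0 < c / (3 * t) := by positivity
    have hYd : (fun ω => 1 + c / (3 * t) * U ω) ∈ pr.dual := by
      refine pr.linf_dual _ ⟨(hUm.const_mul _).const_add 1, 1 + c / (3 * t),
        Filter.Eventually.of_forall fun ω => ?_⟩
      refine (abs_add_le _ _).trans ?_
      rw [abs_one, abs_mul, abs_of_pos hη]
      nlinarith [hUb ω]
    refine hUn 0 ?_
    filter_upwards [(hconj _ hYd).1 hfin] with ω hω
    have : c / (3 * t) * U ω = 0 := by linarith
    exact (mul_eq_zero.1 this).resolve_left hη.ne'

end Collapse
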